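/- Let A be an additive frieze with first row a : ℤ → ℝ and let n ≥ 2 be an integer. If for every r ∈ ℤ and every integer s with 0 ≤ s ≤ n−1 one has ∑_{i=r}^{r+s} a(i) ≥ t_s, then every entry A(r,s) with 0 ≤ s − r ≤ n−1 is nonnegative. -/

import Mathlib

/-- An additive frieze: a map `A` on pairs of integers determined by its first
row `a : ℤ → ℝ` via `A r r = a r`, `A r (r+1) = a r + a (r+1) - 1`, and the
unimodular rule for `s ≥ r + 2`. -/
def IsAdditiveFrieze (A : ℤ → ℤ → ℝ) (a : ℤ → ℝ) : Prop :=
  (∀ r : ℤ, A r r = a r) ∧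
  (∀ r : ℤ, A r (r + 1) = a r + a (r + 1) - 1) ∧
  (∀ r s : ℤ, r + 2 ≤ s → A r s = A r (s - 1) + A (r + 1) s - A (r + 1) (s - 1) - 1)

/-- The `m`-th triangular number `m (m + 1) / 2`, as a real number. -/
noncomputable def tri (m : ℤ) : ℝ := (m : ℝ) * ((m : ℝ) + 1) / 2

/-- The sum over an integer interval splits off its smallest index. -/
theorem sum_Icc_eq_left_add {M : Type*} [AddCommMonoid M] (f : ℤ → M) {r s : ℤ} (hrs : r ≤ s) :
    ∑ i ∈ Finset.Icc r s, f i = f r + ∑ i ∈ Finset.Icc (r + 1) s, f i := by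
  rw [← Finset.insert_Icc_add_one_left_eq_Icc hrs, Finset.sum_insert (by simp)]

/-- Each entry of an additive frieze is the sum of the first-row values above it
minus a triangular number. -/
theorem IsAdditiveFrieze.eq_sum_sub_tri {A : ℤ → ℤ → ℝ} {a : ℤ → ℝ}
    (hA : IsAdditiveFrieze A a) (k : ℕ) (r : ℤ) :
    A r (r + k) = ∑ i ∈ Finset.Icc r (r + k), a i - tri k := by
  obtain ⟨h_diag, h_next, h_rule⟩ := hA
  induction k using Nat.twoStepInduction generalizing r with
  | zero => simp [h_diag, tri]
  | one =>
    rw [sum_Icc_eq_left_add a (by simp)]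
    simp [h_next, tri]
  | more k ih₀ ih₁ =>
    have e_left := ih₁ r
    have e_right := ih₁ (r + 1)
    have e_top := ih₀ (r + 1)
    rw [sum_Icc_eq_left_add a (by omega)] at e_left
    rw [sum_Icc_eq_left_add a (by omega), h_rule r _ (by push_cast; omega)]
    have h_last : r + ((k + 2 : ℕ) : ℤ) = r + 1 + ((k + 1 : ℕ) : ℤ) := by push_cast; ring
    have h_prev : r + 1 + ((k + 1 : ℕ) : ℤ) - 1 = r + ((k + 1 : ℕ) : ℤ) := by ring
    have h_mid : r + 1 + (k : ℤ) = r + ((k + 1 : ℕ) : ℤ) := by push_cast; ring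
    rw [h_mid] at e_top
    rw [h_last, h_prev, e_left, e_right, e_top]
    simp only [tri]
    push_cast
    ring

/-- If every sum of at most `n` consecutive first-row values dominates the
corresponding triangular number, then the entries of the first `n` rows of the
frieze are nonnegative. -/
theorem frieze_nonneg_of_sums_ge_triangular
    (A : ℤ → ℤ → ℝ) (a : ℤ → ℝ) (hA : IsAdditiveFrieze A a)
    (n : ℤ) (hn : 2 ≤ n)
    (h : ∀ r s : ℤ, 0 ≤ s → s ≤ n - 1 →
      tri s ≤ ∑ i ∈ Finset.Icc r (r + s), a i) :
    ∀ r s : ℤ, 0 ≤ s - r → s - r ≤ n - 1 → 0 ≤ A r s := by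
  intro r s h_nonneg h_le
  obtain ⟨k, hk⟩ := Int.eq_ofNat_of_zero_le h_nonneg
  obtain rfl : s = r + k := by omega
  rw [hA.eq_sum_sub_tri]
  exact sub_nonneg.mpr (h r k (by omega) (by omega))
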